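/- arXiv:2001.02511 — 5 statements merged into one kernel-verified Lean document; each statement's English description precedes it below -/
import Mathlib

section
/- If w = (w_1, …, w_N) is a process function, then each component w_i is independent of the output of its own region: for every i and every pair of output tuples x, x' with x_j = x'_j for all j ≠ i, one has w_i(x) = w_i(x'). Hence an observer in a local region cannot signal to their own past. -/
/-!
Freezing the other regions at constant outputs turns the `i`-th component of `w` into a one-variable
map `g : X i → A i` such that `g ∘ h` has a fixed point for every local operation `h`. Such a map is
constant: the local operation that outputs `x'` on the input `g x` and `x` on every other input is
a grandfather paradox, consistent only if `g x = g x'`.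
-/

theorem eq_of_forall_exists_isFixedPt_comp {α β : Type*} {g : α → β}
    (hg : ∀ h : β → α, ∃ b, Function.IsFixedPt (g ∘ h) b) (x x' : α) : g x = g x' := by
  classical
  obtain ⟨b, hb⟩ := hg fun b ↦ if b = g x then x' else x
  change g (if b = g x then x' else x) = b at hb
  split_ifs at hb with h
  · exact (hb.trans h).symm
  · exact absurd hb.symm h

theorem exists_isFixedPt_update_comp {ι : Type*} [DecidableEq ι] {X A : ι → Type*}
    {w : ∀ i, (∀ j, X j) → A i}
    (hw : ∀ f : ∀ i, A i → X i, ∃ a : ∀ i, A i, ∀ i, w i (fun j ↦ f j (a j)) = a i)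
    (i : ι) (x : ∀ j, X j) (h : A i → X i) :
    ∃ b, Function.IsFixedPt ((fun y ↦ w i (Function.update x i y)) ∘ h) b := by
  obtain ⟨a, ha⟩ := hw (Function.update (fun j _ ↦ x j) i h)
  have outputs_eq : (fun j ↦ Function.update (fun j _ ↦ x j) i h j (a j)) =
      Function.update x i (h (a i)) :=
    funext (Function.apply_update (fun j φ ↦ φ (a j)) (fun j _ ↦ x j) i h)
  exact ⟨a i, (congrArg (w i) outputs_eq).symm.trans (ha i)⟩

theorem process_function_no_self_signalling_general {ι : Type*} {X A : ι → Type*}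
    {w : ∀ i, (∀ j, X j) → A i}
    (hw : ∀ f : ∀ i, A i → X i, ∃ a : ∀ i, A i, ∀ i, w i (fun j ↦ f j (a j)) = a i)
    (i : ι) (x x' : ∀ j, X j) (hx : ∀ j, j ≠ i → x j = x' j) : w i x = w i x' := by
  classical
  have x'_eq : x' = Function.update x i (x' i) :=
    Function.eq_update_iff.2 ⟨rfl, fun j hj ↦ (hx j hj).symm⟩
  calc
    w i x = w i (Function.update x i (x i)) := by rw [Function.update_eq_self]
    _ = w i (Function.update x i (x' i)) :=
      eq_of_forall_exists_isFixedPt_comp (exists_isFixedPt_update_comp hw i x) (x i) (x' i)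
    _ = w i x' := by rw [← x'_eq]

/-- If `w` is a process function (unique fixed point condition), then each
component `w_i` is independent of the output of its own region. -/
theorem process_function_no_self_signalling
    {N : ℕ} (hN : 1 ≤ N) (X A : Fin N → Type*)
    [∀ i, Nonempty (X i)] [∀ i, Nonempty (A i)]
    (w : ∀ i : Fin N, (∀ j, X j) → A i)
    (hw : ∀ f : ∀ i, A i → X i, ∃! a : ∀ i, A i,
        ∀ i, w i (fun j => f j (a j)) = a i) :
    ∀ i : Fin N, ∀ x x' : ∀ j, X j,
      (∀ j, j ≠ i → x j = x' j) → w i x = w i x' :=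
  process_function_no_self_signalling_general fun f ↦ (hw f).exists
end

section
/- (Lemma 1, part (i).) Let w = (w_1, …, w_N) with each w_i independent of x_i, regarded as functions w_i : 𝒳_{∖i} → 𝒜_i, where N ≥ 2. If w is a process function, then for every region i and every local operation f_i : 𝒜_i → 𝒳_i, the reduced function w^{f_i} on the remaining N−1 regions is also a process function. -/
/-- A family of functions `w_i : 𝒳_{∖i} → 𝒜_i` (each taking the outputs of all the other
regions) is a process function if for every family of local operations there is a unique
fixed point. -/
def IsProcessRes {ι : Type*} {X A : ι → Type*}
    (w : ∀ i : ι, (∀ j : {j : ι // j ≠ i}, X j.1) → A i) : Prop :=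
  ∀ f : ∀ i, A i → X i, ∃! a : ∀ i, A i,
    ∀ i, w i (fun j => f j.1 (a j.1)) = a i

/-- Process-function condition for a family of functions whose components take the outputs
of all regions (full tuples). -/
def IsProcessFull {ι : Type*} {X A : ι → Type*}
    (w : ∀ i : ι, (∀ j, X j) → A i) : Prop :=
  ∀ f : ∀ i, A i → X i, ∃! a : ∀ i, A i,
    ∀ i, w i (fun j => f j (a j)) = a i

/-- The reduced function `w^{f_i}` on the remaining regions, obtained by fixing the local
operation of region `i` to `fi`:  `w^{f_i}_j(x_{∖i}) := w_j(x_{∖i}, f_i(w_i(x_{∖i})))`. -/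
def reduceOp {ι : Type*} [DecidableEq ι] {X A : ι → Type*}
    (w : ∀ i : ι, (∀ j : {j : ι // j ≠ i}, X j.1) → A i) (i : ι) (fi : A i → X i) :
    ∀ j : {j : ι // j ≠ i}, (∀ k : {k : ι // k ≠ i}, X k.1) → A j.1 :=
  fun j x => w j.1 (fun k =>
    if h : k.1 = i then cast (congrArg X h).symm (fi (w i x)) else x ⟨k.1, h⟩)

/-!
Split a tuple of inputs at region `i`. The fixed point equation of region `i` determines `a i` from
the remaining inputs, and substituting it into the other equations gives exactly the fixed point
equations of the reduced function. So, once all local operations are chosen, restriction to the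
remaining regions is a bijection between the fixed points of `w` and those of `w^{f_i}`.
-/

theorem existsUnique_apply_snd_eq_fst_and_iff {α β : Type*} (g : β → α) (P : β → Prop) :
    (∃! p : α × β, g p.2 = p.1 ∧ P p.2) ↔ ∃! b, P b := by
  constructor
  · rintro ⟨⟨_, b⟩, ⟨-, hb⟩, unique⟩
    exact ⟨b, hb, fun c hc => congrArg Prod.snd (unique (g c, c) ⟨rfl, hc⟩)⟩
  · rintro ⟨b, hb, unique⟩
    refine ⟨(g b, b), ⟨rfl, hb⟩, fun ⟨_, c⟩ ⟨hfst, hc⟩ => ?_⟩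
    obtain rfl : c = b := unique c hc
    exact Prod.ext hfst.symm rfl

theorem existsUnique_apply_restrict_eq_and_iff {ι : Type*} {A : ι → Type*} (i : ι)
    (g : (∀ j : {j : ι // j ≠ i}, A j.1) → A i) (P : (∀ j : {j : ι // j ≠ i}, A j.1) → Prop) :
    (∃! a : ∀ j, A j, g (fun j => a j.1) = a i ∧ P (fun j => a j.1)) ↔ ∃! b, P b := by
  classical
  exact ((Equiv.piSplitAt i A).existsUnique_congr fun _ => Iff.rfl).trans
    (existsUnique_apply_snd_eq_fst_and_iff g P)

section

variable {ι : Type*} [DecidableEq ι] {X A : ι → Type*}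
variable (w : ∀ i : ι, (∀ j : {j : ι // j ≠ i}, X j.1) → A i) (i : ι)

theorem reduceOp_restrict {fi : A i → X i} {x : ∀ k, X k} (hx : fi (w i fun k => x k.1) = x i)
    (j : {j : ι // j ≠ i}) : reduceOp w i fi j (fun k => x k.1) = w j.1 (fun k => x k.1) := by
  unfold reduceOp
  congr 1
  funext ⟨k, _⟩
  by_cases hk : k = i
  · subst hk
    simpa using hx
  · simp [hk]

theorem forall_apply_eq_iff_reduceOp (f : ∀ j, A j → X j) (a : ∀ j, A j) :
    (∀ j, w j (fun k => f k.1 (a k.1)) = a j) ↔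
      w i (fun k => f k.1 (a k.1)) = a i ∧
        ∀ j : {j : ι // j ≠ i}, reduceOp w i (f i) j (fun k => f k.1 (a k.1)) = a j.1 := by
  have split : (∀ j, w j (fun k => f k.1 (a k.1)) = a j) ↔
      w i (fun k => f k.1 (a k.1)) = a i ∧
        ∀ j : {j : ι // j ≠ i}, w j.1 (fun k => f k.1 (a k.1)) = a j.1 := by
    rw [Subtype.forall]
    exact ⟨fun h => ⟨h i, fun j _ => h j⟩,
      fun h j => (eq_or_ne j i).elim (by rintro rfl; exact h.1) (h.2 j)⟩
  rw [split]
  refine and_congr_right fun hi => forall_congr' fun j => ?_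
  rw [reduceOp_restrict w i (x := fun k => f k (a k)) (congrArg (f i) hi) j]

theorem existsUnique_forall_apply_eq_iff_reduceOp (f : ∀ j, A j → X j) :
    (∃! a : ∀ j, A j, ∀ j, w j (fun k => f k.1 (a k.1)) = a j) ↔
      ∃! b : ∀ j : {j : ι // j ≠ i}, A j.1,
        ∀ j, reduceOp w i (f i) j (fun k => f k.1 (b k)) = b j := by
  rw [existsUnique_congr (forall_apply_eq_iff_reduceOp w i f)]
  exact existsUnique_apply_restrict_eq_and_iff i (fun b => w i fun k => f k.1 (b k))
    (fun b => ∀ j, reduceOp w i (f i) j (fun k => f k.1 (b k)) = b j)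

variable {w}

theorem reduced_of_process_general (hw : IsProcessRes w) (fi : A i → X i) :
    IsProcessFull (ι := {j : ι // j ≠ i})
      (X := fun j => X j.1) (A := fun j => A j.1) (reduceOp w i fi) := by
  intro f
  obtain ⟨F, hF⟩ := (Equiv.piSplitAt i fun j => A j → X j).surjective (fi, f)
  obtain ⟨rfl, rfl⟩ := Prod.ext_iff.mp hF
  exact (existsUnique_forall_apply_eq_iff_reduceOp w i F).mp (hw F)

end

/-- Lemma 1, part (i): if `w` is a process function, then every reduced
function `w^{f_i}` is a process function on the remaining `N−1` regions. -/
theorem reduced_of_process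
    {N : ℕ} (hN : 2 ≤ N) (X A : Fin N → Type*)
    [∀ i, Nonempty (X i)] [∀ i, Nonempty (A i)]
    (w : ∀ i : Fin N, (∀ j : {j : Fin N // j ≠ i}, X j.1) → A i)
    (hw : IsProcessRes w) (i : Fin N) (fi : A i → X i) :
    IsProcessFull (ι := {j : Fin N // j ≠ i})
      (X := fun j => X j.1) (A := fun j => A j.1) (reduceOp w i fi) :=
  reduced_of_process_general i hw fi
end

section
/- (Single-region characterisation.) A function w : 𝒳 → 𝒜 on a single region (with 𝒳 and 𝒜 nonempty) is a process function, i.e., for every f : 𝒜 → 𝒳 there is a unique a ∈ 𝒜 with w(f(a)) = a, if and only if w is constant. -/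
open Function in
theorem apply_eq_apply_of_forall_exists_isFixedPt_comp {X A : Type*} {w : X → A}
    (exists_fixed : ∀ f : A → X, ∃ a, IsFixedPt (w ∘ f) a) (x y : X) : w x = w y := by
  classical
  -- If `w x ≠ w y`, then `w ∘ f` has no fixed point: it moves `w x` to `w y`, all else to `w x`.
  let f : A → X := update (const A x) (w x) y
  obtain ⟨a, ha⟩ := exists_fixed f
  obtain rfl | hne := eq_or_ne a (w x)
  · calc
      w x = w (f (w x)) := ha.symm
      _ = w y := congrArg w (update_self ..)
  · have a_eq : a = w x := calc
      a = w (f a) := ha.symm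
      _ = w x := congrArg w (update_of_ne hne ..)
    exact absurd a_eq hne

/-- single-region characterisation: a function `w : 𝒳 → 𝒜` on a single region
is a process function (for every local operation `f` there is a unique `a` with `w(f(a)) = a`)
if and only if `w` is constant. -/
theorem single_region_process_iff_constant
    (X A : Type*) [Nonempty X] [Nonempty A] (w : X → A) :
    (∀ f : A → X, ∃! a : A, w (f a) = a) ↔ (∃ c : A, ∀ x : X, w x = c) := by
  constructor
  · intro process
    obtain ⟨x⟩ := ‹Nonempty X›
    exact ⟨w x, fun y =>
      apply_eq_apply_of_forall_exists_isFixedPt_comp (fun f => (process f).exists) y x⟩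
  · rintro ⟨c, hc⟩ f
    exact ⟨c, hc (f c), fun a ha => ha.symm.trans (hc (f a))⟩
end

section
/- (Bipartite characterisation.) A pair of functions w_1, w_2 : 𝒳_1 × 𝒳_2 → 𝒜_1, 𝒜_2 (with all state spaces nonempty) is a process function if and only if: (i) w_1(x_1, x_2) = w_1(x_2) depends only on x_2, (ii) w_2(x_1, x_2) = w_2(x_1) depends only on x_1, and (iii) at least one of the two functions w_1(x_2), w_2(x_1) is constant. In particular, bipartite process functions allow at most one-way signalling. -/
/-!
Local operations `f₁`, `f₂` can be chosen to make both `w (x₁, x₂)` and `w (x₁', x₂')` fixed points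
unless some region receives the same input from both but would have to answer it in two different
ways. Uniqueness then forces the two input pairs to agree. Varying only one region's output shows
that no region signals to itself; varying both shows that the inputs of the two regions cannot both
change. Conversely, if signalling is one-way, the region that receives nothing gets a constant
input, and its output determines the input of the other.
-/

theorem exists_map_eq_and_map_eq_iff {α β : Type*} {a a' : α} {b b' : β} :
    (∃ f : α → β, f a = b ∧ f a' = b') ↔ (a = a' → b = b') := by
  classical
  constructor
  · rintro ⟨f, rfl, rfl⟩ h
    exact congrArg f h
  · intro h
    refine ⟨Function.update (fun _ ↦ b') a b, Function.update_self .., ?_⟩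
    rcases eq_or_ne a' a with rfl | hne
    · rw [Function.update_self, h rfl]
    · exact Function.update_of_ne hne ..

section

variable {X₁ X₂ A₁ A₂ : Type*} {w₁ : X₁ → X₂ → A₁} {w₂ : X₁ → X₂ → A₂}

/-- The pair of inputs `a` is self-consistent for the process `(w₁, w₂)` under the local operations
`f₁` and `f₂`. -/
def IsProcessFixedPoint (w₁ : X₁ → X₂ → A₁) (w₂ : X₁ → X₂ → A₂) (f₁ : A₁ → X₁) (f₂ : A₂ → X₂)
    (a : A₁ × A₂) : Prop :=
  w₁ (f₁ a.1) (f₂ a.2) = a.1 ∧ w₂ (f₁ a.1) (f₂ a.2) = a.2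

theorem isProcessFixedPoint_flip {f₁ : A₁ → X₁} {f₂ : A₂ → X₂} {a : A₂ × A₁} :
    IsProcessFixedPoint (flip w₂) (flip w₁) f₂ f₁ a ↔ IsProcessFixedPoint w₁ w₂ f₁ f₂ a.swap :=
  and_comm

/-- The unique fixed point condition, for a bipartite process with curried components. -/
def IsProcessFunction (w₁ : X₁ → X₂ → A₁) (w₂ : X₁ → X₂ → A₂) : Prop :=
  ∀ (f₁ : A₁ → X₁) (f₂ : A₂ → X₂), ∃! a : A₁ × A₂, IsProcessFixedPoint w₁ w₂ f₁ f₂ a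

/-- The uniqueness half of the unique fixed point condition. -/
def HasAtMostOneFixedPoint (w₁ : X₁ → X₂ → A₁) (w₂ : X₁ → X₂ → A₂) : Prop :=
  ∀ (f₁ : A₁ → X₁) (f₂ : A₂ → X₂), {a | IsProcessFixedPoint w₁ w₂ f₁ f₂ a}.Subsingleton

namespace HasAtMostOneFixedPoint

theorem flip (h : HasAtMostOneFixedPoint w₁ w₂) :
    HasAtMostOneFixedPoint (flip w₂) (flip w₁) := fun f₂ f₁ _ ha _ hb ↦
  Prod.swap_injective <|
    h f₁ f₂ (isProcessFixedPoint_flip.1 ha) (isProcessFixedPoint_flip.1 hb)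

theorem eq_and_eq (h : HasAtMostOneFixedPoint w₁ w₂) {x₁ x₁' : X₁} {x₂ x₂' : X₂}
    (h₁ : w₁ x₁ x₂ = w₁ x₁' x₂' → x₁ = x₁') (h₂ : w₂ x₁ x₂ = w₂ x₁' x₂' → x₂ = x₂') :
    w₁ x₁ x₂ = w₁ x₁' x₂' ∧ w₂ x₁ x₂ = w₂ x₁' x₂' := by
  obtain ⟨f₁, hf₁, hf₁'⟩ := exists_map_eq_and_map_eq_iff.2 h₁
  obtain ⟨f₂, hf₂, hf₂'⟩ := exists_map_eq_and_map_eq_iff.2 h₂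
  have fixed : IsProcessFixedPoint w₁ w₂ f₁ f₂ (w₁ x₁ x₂, w₂ x₁ x₂) := by
    simp only [IsProcessFixedPoint, hf₁, hf₂, and_self]
  have fixed' : IsProcessFixedPoint w₁ w₂ f₁ f₂ (w₁ x₁' x₂', w₂ x₁' x₂') := by
    simp only [IsProcessFixedPoint, hf₁', hf₂', and_self]
  exact Prod.mk_inj.1 (h f₁ f₂ fixed fixed')

theorem left_eq (h : HasAtMostOneFixedPoint w₁ w₂) (x₁ x₁' : X₁) (x₂ : X₂) :
    w₁ x₁ x₂ = w₁ x₁' x₂ := by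
  by_contra hne
  exact hne (h.eq_and_eq (absurd · hne) fun _ ↦ rfl).1

theorem right_eq (h : HasAtMostOneFixedPoint w₁ w₂) (x₁ : X₁) (x₂ x₂' : X₂) :
    w₂ x₁ x₂ = w₂ x₁ x₂' :=
  h.flip.left_eq x₂ x₂' x₁

theorem left_eq_or_right_eq (h : HasAtMostOneFixedPoint w₁ w₂) (x₁ x₁' : X₁) (x₂ x₂' : X₂) :
    w₁ x₁ x₂ = w₁ x₁' x₂' ∨ w₂ x₁ x₂ = w₂ x₁' x₂' := by
  by_contra! ⟨hne₁, hne₂⟩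
  exact hne₁ (h.eq_and_eq (absurd · hne₁) (absurd · hne₂)).1

theorem left_const_or_right_const [Nonempty X₁] [Nonempty X₂]
    (h : HasAtMostOneFixedPoint w₁ w₂) :
    (∃ c, ∀ x₁ x₂, w₁ x₁ x₂ = c) ∨ ∃ c, ∀ x₁ x₂, w₂ x₁ x₂ = c := by
  obtain ⟨x₁⟩ := ‹Nonempty X₁›
  obtain ⟨x₂⟩ := ‹Nonempty X₂›
  refine or_iff_not_imp_left.2 fun hconst ↦ ⟨w₂ x₁ x₂, fun y₁ y₂ ↦ ?_⟩
  push Not at hconst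
  obtain ⟨z₁, z₂, hz⟩ := hconst (w₁ x₁ x₂)
  have hne : w₁ y₁ z₂ ≠ w₁ x₁ x₂ := h.left_eq y₁ z₁ z₂ ▸ hz
  calc
    w₂ y₁ y₂ = w₂ y₁ z₂ := h.right_eq y₁ y₂ z₂
    _ = w₂ x₁ x₂ := (h.left_eq_or_right_eq y₁ x₁ z₂ x₂).resolve_left hne

end HasAtMostOneFixedPoint

namespace IsProcessFunction

theorem hasAtMostOneFixedPoint (h : IsProcessFunction w₁ w₂) : HasAtMostOneFixedPoint w₁ w₂ :=
  fun f₁ f₂ _ ha _ hb ↦ (h f₁ f₂).unique ha hb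

theorem flip (h : IsProcessFunction w₁ w₂) : IsProcessFunction (flip w₂) (flip w₁) :=
  fun f₂ f₁ ↦ ((Equiv.prodComm A₂ A₁).existsUnique_congr fun _ ↦
    isProcessFixedPoint_flip).2 (h f₁ f₂)

theorem of_left_const [Nonempty X₂] {c : A₁} (hc : ∀ x₁ x₂, w₁ x₁ x₂ = c)
    (h₂ : ∀ x₁ x₂ x₂', w₂ x₁ x₂ = w₂ x₁ x₂') : IsProcessFunction w₁ w₂ := by
  intro f₁ f₂
  obtain ⟨x₂⟩ := ‹Nonempty X₂›
  refine ⟨(c, w₂ (f₁ c) x₂), ⟨hc _ _, h₂ _ _ _⟩, ?_⟩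
  rintro ⟨a₁, a₂⟩ ⟨ha₁, ha₂⟩
  obtain rfl : c = a₁ := (hc _ _).symm.trans ha₁
  exact Prod.ext rfl (ha₂.symm.trans (h₂ _ _ _))

theorem of_right_const [Nonempty X₁] {c : A₂} (h₁ : ∀ x₁ x₁' x₂, w₁ x₁ x₂ = w₁ x₁' x₂)
    (hc : ∀ x₁ x₂, w₂ x₁ x₂ = c) : IsProcessFunction w₁ w₂ :=
  (of_left_const (w₁ := _root_.flip w₂) (w₂ := _root_.flip w₁) (fun x₂ x₁ ↦ hc x₁ x₂)
    fun x₂ x₁ x₁' ↦ h₁ x₁ x₁' x₂).flip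

end IsProcessFunction

theorem bipartite_process_characterisation_general [Nonempty X₁] [Nonempty X₂]
    (w₁ : X₁ → X₂ → A₁) (w₂ : X₁ → X₂ → A₂) :
    List.TFAE [
      IsProcessFunction w₁ w₂,
      HasAtMostOneFixedPoint w₁ w₂,
      (∀ x₁ x₁' x₂, w₁ x₁ x₂ = w₁ x₁' x₂) ∧ (∀ x₁ x₂ x₂', w₂ x₁ x₂ = w₂ x₁ x₂') ∧
        ((∃ c, ∀ x₁ x₂, w₁ x₁ x₂ = c) ∨ ∃ c, ∀ x₁ x₂, w₂ x₁ x₂ = c)] := by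
  tfae_have 1 → 2 := IsProcessFunction.hasAtMostOneFixedPoint
  tfae_have 2 → 3 := fun h ↦ ⟨h.left_eq, h.right_eq, h.left_const_or_right_const⟩
  tfae_have 3 → 1
  | ⟨_, h₂, .inl ⟨_, hc⟩⟩ => .of_left_const hc h₂
  | ⟨h₁, _, .inr ⟨_, hc⟩⟩ => .of_right_const h₁ hc
  tfae_finish

end

/-- bipartite characterisation: a pair `(w_1, w_2)` is a process function iff
`w_1` depends only on `x_2`, `w_2` depends only on `x_1`, and at least one of them is
constant; in particular at most one-way signalling is possible. -/
theorem bipartite_process_characterisation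
    (X₁ X₂ A₁ A₂ : Type*) [Nonempty X₁] [Nonempty X₂] [Nonempty A₁] [Nonempty A₂]
    (w₁ : X₁ → X₂ → A₁) (w₂ : X₁ → X₂ → A₂) :
    (∀ (f₁ : A₁ → X₁) (f₂ : A₂ → X₂), ∃! a : A₁ × A₂,
        w₁ (f₁ a.1) (f₂ a.2) = a.1 ∧ w₂ (f₁ a.1) (f₂ a.2) = a.2) ↔
      ((∀ x₁ x₁' : X₁, ∀ x₂ : X₂, w₁ x₁ x₂ = w₁ x₁' x₂) ∧
       (∀ x₁ : X₁, ∀ x₂ x₂' : X₂, w₂ x₁ x₂ = w₂ x₁ x₂') ∧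
       ((∃ c : A₁, ∀ x₁ x₂, w₁ x₁ x₂ = c) ∨ (∃ c : A₂, ∀ x₁ x₂, w₂ x₁ x₂ = c))) :=
  (bipartite_process_characterisation_general w₁ w₂).out 0 2
end

section
/- (Inequivalence of equations (10) and (11) under relabelling.) Let w be the quadripartite function on bits defined by a_1 = x_4·(x_2⊕1)·(x_3⊕1), a_2 = x_1·(x_4⊕1)·(x_3⊕1), a_3 = x_2·(x_1⊕1)·(x_4⊕1), a_4 = x_3·(x_2⊕1)·(x_1⊕1), and let v be the quadripartite function on bits defined by a_1 = x_2·(x_3⊕x_4), a_2 = x_3·(x_4·(x_1⊕1)⊕1), a_3 = x_4·(x_1⊕1)·(x_2⊕1), a_4 = x_1·(x_2⊕1)·(x_3⊕1). Then w and v are not equivalent under relabelling: there exist no permutation π of {1,2,3,4} and no bijections α_1, …, α_4 : {0,1} → {0,1} (input relabellings) and β_1, …, β_4 : {0,1} → {0,1} (output relabellings) such that for all (x_1, x_2, x_3, x_4) ∈ {0,1}^4 and all i, α_i(w_i(x_{∖i})) = v_{π(i)}(y_{∖π(i)}) where y_{π(j)} = β_j(x_j) for every j. -/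
/-- The quadripartite process function of equation (10), with bits as `Bool` and regions
`1,2,3,4` indexed by `0,1,2,3 : Fin 4`; component `i` ignores its own slot:
`a₁ = x₄·(x₂⊕1)·(x₃⊕1)`, `a₂ = x₁·(x₄⊕1)·(x₃⊕1)`, `a₃ = x₂·(x₁⊕1)·(x₄⊕1)`,
`a₄ = x₃·(x₂⊕1)·(x₁⊕1)`. -/
def W (i : Fin 4) (x : Fin 4 → Bool) : Bool :=
  if i = 0 then x 3 && (!(x 1)) && (!(x 2))
  else if i = 1 then x 0 && (!(x 3)) && (!(x 2))
  else if i = 2 then x 1 && (!(x 0)) && (!(x 3))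
  else x 2 && (!(x 1)) && (!(x 0))

/-- The quadripartite process function of equation (11):
`a₁ = x₂·(x₃⊕x₄)`, `a₂ = x₃·(x₄·(x₁⊕1)⊕1)`, `a₃ = x₄·(x₁⊕1)·(x₂⊕1)`,
`a₄ = x₁·(x₂⊕1)·(x₃⊕1)`. -/
def V (i : Fin 4) (x : Fin 4 → Bool) : Bool :=
  if i = 0 then x 1 && (xor (x 2) (x 3))
  else if i = 1 then x 2 && (!(x 3 && (!(x 0))))
  else if i = 2 then x 3 && (!(x 0)) && (!(x 1))
  else x 0 && (!(x 1)) && (!(x 2))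

/-!
Call the number of points at which a Boolean function is true its weight. Precomposing with a
bijection preserves the weight, so the weight of each component survives a relabelling of the
outputs, while an input relabelling at most replaces a component by its complement. Each `W i` is a
conjunction of three literals in distinct variables, of weight `2` among `16` points, so functions
of `W i` have weight `0`, `2`, `14` or `16`. But `V 0` has weight `4`: it is true exactly when
`x₂ = 1` and `x₃ ≠ x₄`, with `x₁` free.
-/

section Weight

variable {X Y : Type*} [Fintype X] [Fintype Y]

/-- The (Hamming) weight of a Boolean function on a finite type, i.e. the number of points at which
it is true. It serves as the invariant separating `W` from `V`. -/
def hammingWeight (f : X → Bool) : ℕ :=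
  (Finset.univ.filter fun x => f x = true).card

theorem hammingWeight_comp_of_bijective (f : Y → Bool) {T : X → Y} (hT : T.Bijective) :
    hammingWeight (f ∘ T) = hammingWeight f :=
  Finset.card_bijective T hT (by simp)

theorem hammingWeight_not_comp (f : X → Bool) :
    hammingWeight (not ∘ f) = Fintype.card X - hammingWeight f := by
  classical
  simp only [hammingWeight, ← Finset.card_compl, Finset.compl_filter, Function.comp_apply,
    Bool.not_eq_true', Bool.not_eq_true]

theorem hammingWeight_const (b : Bool) :
    hammingWeight (Function.const X b) = b.toNat * Fintype.card X := by
  cases b <;> simp [hammingWeight]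

theorem hammingWeight_comp_mem (α : Bool → Bool) (f : X → Bool) :
    hammingWeight (α ∘ f) ∈
      ({0, hammingWeight f, Fintype.card X - hammingWeight f, Fintype.card X} : Set ℕ) := by
  have hα : α = id ∨ α = not ∨ ∃ b, α = Function.const Bool b := by
    revert α
    decide
  obtain rfl | rfl | ⟨b, rfl⟩ := hα
  · simp
  · simp [hammingWeight_not_comp]
  · cases b <;> simp [hammingWeight_const]

end Weight

theorem hammingWeight_W (i : Fin 4) : hammingWeight (W i) = 2 := by
  revert i
  decide

theorem hammingWeight_V_zero : hammingWeight (V 0) = 4 := by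
  decide

theorem bijective_reindex_map {ι κ : Type*} {X Y : ι → Type*} (π : ι ≃ κ) {β : ∀ i, X i → Y i}
    (hβ : ∀ i, (β i).Bijective) :
    Function.Bijective fun (x : ∀ i, X i) (m : κ) => β (π.symm m) (x (π.symm m)) :=
  (Equiv.piCongrLeft' Y π).bijective.comp (Function.Bijective.piMap hβ)

theorem eq10_eq11_inequivalent_general (i : Fin 4) (α : Bool → Bool)
    {T : (Fin 4 → Bool) → Fin 4 → Bool} (hT : T.Bijective) : α ∘ W i ≠ V 0 ∘ T := by
  intro h
  have hweight : hammingWeight (α ∘ W i) = 4 := by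
    rw [h, hammingWeight_comp_of_bijective _ hT, hammingWeight_V_zero]
  have hmem := hammingWeight_comp_mem α (W i)
  simp [hweight, hammingWeight_W] at hmem

/-- inequivalence of equations (10) and (11) under relabelling: there are no
permutation `π` of the regions, output relabellings `β_j` and input relabellings `α_i`
(bijections of the bit) such that `α_i(w_i(x_{∖i})) = v_{π(i)}(y_{∖π(i)})` for all `x`,
where `y_{π(j)} = β_j(x_j)`. -/
theorem eq10_eq11_inequivalent :
    ¬ ∃ (π : Equiv.Perm (Fin 4)) (α β : Fin 4 → (Bool → Bool)),
        (∀ i, Function.Bijective (α i)) ∧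
        (∀ j, Function.Bijective (β j)) ∧
        (∀ (x : Fin 4 → Bool) (i : Fin 4),
          α i (W i x) = V (π i) (fun m => β (π.symm m) (x (π.symm m)))) := by
  rintro ⟨π, α, β, -, hβ, h⟩
  exact eq10_eq11_inequivalent_general (π.symm 0) (α (π.symm 0)) (bijective_reindex_map π hβ)
    (funext fun x => by simpa using h x (π.symm 0))
end
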